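/- Let (X,d) be a metric space preordered by a reflexive transitive relation ≼ such that every ≼-decreasing Cauchy sequence in X converges in X. Assume that: (i) for every x ∈ X the lower section S(x) := {x' ∈ X | x' ≼ x} is ≼-lower closed, i.e. for every ≼-decreasing sequence (x_n)_{n≥1} ⊆ S(x) with x_n → u one has u ∈ S(x); and (ii) every ≼-decreasing sequence (x_n)_{n≥1} ⊆ X is asymptotic, i.e. d(x_n,x_{n+1}) → 0. Then for every x ∈ X there exists x̄ ∈ X such that x̄ ≼ x and S(x̄) = {x̄}. -/

import Mathlib

/-!
Since decreasing sequences are asymptotic, the relation `z ≤ y ∧ ε ≤ dist z y` is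
well-founded for every `ε > 0`, so below every point there is some `y` with `Iic y ⊆ ball y ε`.
Descending through such points for a sequence `ε n → 0` gives a decreasing Cauchy sequence which
converges to each of its lower bounds. If `y` is a lower bound, then so is everything below `y`;
uniqueness of limits therefore leaves only `y` itself in `Iic y`. A lower bound exists: the limit
is one, because lower sections are lower closed.
-/

open Filter Metric Set Topology

section Preorder

variable {X : Type*} [Preorder X]

theorem exists_antitone_forall_mem {D : ℕ → Set X} (hD : ∀ n, IsCoinitial (D n)) (x : X) :
    ∃ s : ℕ → X, Antitone s ∧ (∀ n, s n ≤ x) ∧ ∀ n, s n ∈ D n := by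
  let 𝒟 : ℕ → Order.Cofinal Xᵒᵈ := fun n ↦ ⟨OrderDual.ofDual ⁻¹' D n, hD n⟩
  let t : ℕ → Xᵒᵈ := Order.sequenceOfCofinals (OrderDual.toDual x) 𝒟
  have ht : Monotone t := Order.sequenceOfCofinals.monotone _ 𝒟
  exact ⟨fun n ↦ OrderDual.ofDual (t (n + 1)), fun _ _ hmn ↦ ht (Nat.succ_le_succ hmn),
    fun n ↦ ht (Nat.zero_le (n + 1)), Order.sequenceOfCofinals.encode_mem _ 𝒟⟩

theorem mem_lowerBounds_range_of_tendsto [TopologicalSpace X]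
    (hclosed : ∀ x, ∀ w : ℕ → X, Antitone w → (∀ n, w n ≤ x) →
      ∀ u, Tendsto w atTop (𝓝 u) → u ≤ x)
    {s : ℕ → X} (hs : Antitone s) {u : X} (hu : Tendsto s atTop (𝓝 u)) :
    u ∈ lowerBounds (range s) := by
  rintro _ ⟨n, rfl⟩
  have htail : Antitone fun k ↦ s (k + n) := fun _ _ hij ↦ hs (Nat.add_le_add_right hij n)
  exact hclosed (s n) _ htail (fun k ↦ hs (Nat.le_add_left n k)) u
    ((tendsto_add_atTop_iff_nat n).mpr hu)

end Preorder

section PseudoMetric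

variable {X : Type*} [PseudoMetricSpace X] [Preorder X]

theorem wellFounded_le_and_le_dist
    (hasymptotic : ∀ w : ℕ → X, Antitone w →
      Tendsto (fun n ↦ dist (w n) (w (n + 1))) atTop (𝓝 0))
    {ε : ℝ} (hε : 0 < ε) : WellFounded fun z y : X ↦ z ≤ y ∧ ε ≤ dist z y := by
  refine wellFounded_iff_isEmpty_descending_chain.mpr ⟨fun ⟨w, hw⟩ ↦ ?_⟩
  have hanti : Antitone w := antitone_nat_of_succ_le fun n ↦ (hw n).1
  obtain ⟨n, hn⟩ := ((hasymptotic w hanti).eventually_lt_const hε).exists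
  exact hn.not_ge (dist_comm (w n) _ ▸ (hw n).2)

theorem isCoinitial_setOf_Iic_subset_ball
    (hasymptotic : ∀ w : ℕ → X, Antitone w →
      Tendsto (fun n ↦ dist (w n) (w (n + 1))) atTop (𝓝 0))
    {ε : ℝ} (hε : 0 < ε) : IsCoinitial {y : X | Iic y ⊆ ball y ε} := by
  intro x
  obtain ⟨y, hyx, hmin⟩ :=
    (wellFounded_le_and_le_dist hasymptotic hε).has_min (Iic x) nonempty_Iic
  exact ⟨y, fun z hz ↦ not_le.mp fun hfar ↦ hmin z (le_trans hz hyx) ⟨hz, hfar⟩, hyx⟩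

theorem cauchySeq_of_antitone_of_Iic_subset_ball {s : ℕ → X} (hs : Antitone s) {ε : ℕ → ℝ}
    (hball : ∀ n, Iic (s n) ⊆ ball (s n) (ε n)) (hε : Tendsto ε atTop (𝓝 0)) : CauchySeq s :=
  cauchySeq_of_le_tendsto_0' ε (fun n _ hnm ↦ (mem_ball'.mp (hball n (hs hnm))).le) hε

theorem tendsto_of_mem_lowerBounds_of_Iic_subset_ball {s : ℕ → X} {ε : ℕ → ℝ}
    (hball : ∀ n, Iic (s n) ⊆ ball (s n) (ε n)) (hε : Tendsto ε atTop (𝓝 0))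
    {z : X} (hz : z ∈ lowerBounds (range s)) : Tendsto s atTop (𝓝 z) :=
  tendsto_iff_dist_tendsto_zero.mpr <| squeeze_zero (fun _ ↦ dist_nonneg)
    (fun n ↦ (mem_ball'.mp (hball n (hz (mem_range_self n)))).le) hε

theorem statement9_general
    (hbdd : ∀ w : ℕ → X, Antitone w → CauchySeq w → BddBelow (range w))
    (hasymptotic : ∀ w : ℕ → X, Antitone w →
      Tendsto (fun n ↦ dist (w n) (w (n + 1))) atTop (𝓝 0)) (x : X) :
    ∃ y ≤ x, ∀ z ≤ y, Inseparable z y := by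
  obtain ⟨ε, -, hεpos, hε⟩ := exists_seq_strictAnti_tendsto (0 : ℝ)
  obtain ⟨s, hs, hsx, hball⟩ := exists_antitone_forall_mem
    (fun n ↦ isCoinitial_setOf_Iic_subset_ball hasymptotic (hεpos n)) x
  obtain ⟨y, hy⟩ := hbdd s hs (cauchySeq_of_antitone_of_Iic_subset_ball hs hball hε)
  have hlim : ∀ z ∈ lowerBounds (range s), Tendsto s atTop (𝓝 z) := fun _ ↦
    tendsto_of_mem_lowerBounds_of_Iic_subset_ball hball hε
  exact ⟨y, (hy (mem_range_self 0)).trans (hsx 0), fun z hz ↦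
    tendsto_nhds_unique_inseparable (hlim z (lowerBounds_mono_mem hz hy)) (hlim y hy)⟩

end PseudoMetric

/-- Dancs–Hegedüs–Medvegyev / Turinici type minimal element theorem on a
`≼`-complete metric space with `≼`-lower closed sections and asymptotic
decreasing sequences. -/
theorem statement9 {X : Type*} [MetricSpace X]
    (r : X → X → Prop) (hrefl : ∀ x, r x x) (htrans : Transitive r)
    (hcomplete : ∀ x : ℕ → X, (∀ n, r (x (n + 1)) (x n)) → CauchySeq x →
      ∃ l, Filter.Tendsto x Filter.atTop (nhds l))
    (hlowerclosed : ∀ x : X, ∀ w : ℕ → X, (∀ n, r (w n) x) →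
      (∀ n, r (w (n + 1)) (w n)) → ∀ u, Filter.Tendsto w Filter.atTop (nhds u) → r u x)
    (hasymptotic : ∀ w : ℕ → X, (∀ n, r (w (n + 1)) (w n)) →
      Filter.Tendsto (fun n => dist (w n) (w (n + 1))) Filter.atTop (nhds 0)) :
    ∀ x : X, ∃ xbar, r xbar x ∧ {x' | r x' xbar} = {xbar} := by
  intro x
  let : Preorder X :=
    { le := r, le_refl := hrefl, le_trans := fun _ _ _ hab hbc ↦ htrans hab hbc }
  have hstep {w : ℕ → X} (hw : Antitone w) (n : ℕ) : r (w (n + 1)) (w n) := hw n.le_succ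
  have hbdd (w : ℕ → X) (hw : Antitone w) (hcauchy : CauchySeq w) : BddBelow (range w) :=
    (hcomplete w (hstep hw) hcauchy).imp fun _ ↦ mem_lowerBounds_range_of_tendsto
      (fun x v hv hvx ↦ hlowerclosed x v hvx (hstep hv)) hw
  obtain ⟨y, hyx, hmin⟩ := statement9_general hbdd (fun w hw ↦ hasymptotic w (hstep hw)) x
  exact ⟨y, hyx, eq_singleton_iff_unique_mem.mpr ⟨hrefl y, fun z hz ↦ (hmin z hz).eq⟩⟩
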